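/- Let A be a finite-dimensional k-algebra and C = A* its dual coalgebra. For a left A-module M and a right A-module N (equivalently, a right C-comodule M and left C-comodule N), there is an isomorphism Cotor^n_C(M, N) ≅ HH^n(A, M ⊗ N) for all n ≥ 0, where M ⊗ N is an A-bimodule via a·(m⊗n) = am ⊗ n and (m⊗n)·a = m ⊗ na. -/

import Mathlib

/-!
Finite dimensionality identifies `A* ⊗ V` with `Hom_k(A, V)`, hence `M ⊗ (A*)^{⊗n} ⊗ N` with the
Hochschild `n`-cochains valued in `M ⊗ N`. A cochain is determined by its values on tuples
`a : Fin n → A`, and on the cobar side these values are obtained by contracting the factors `A*`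
against the entries of `a`. Under contraction the coactions become the actions and `Δ` becomes the
multiplication of `A`, so both differentials are given by the same formula, already at the level of
cochains.
-/

open TensorProduct

noncomputable section

universe u

variable (k : Type u) [Field k]
variable (C : Type u) [AddCommGroup C] [Module k C]
variable (M : Type u) [AddCommGroup M] [Module k M]
variable (N : Type u) [AddCommGroup N] [Module k N]

/-- The coefficient tensor powers `M ⊗ C^{⊗n}` of the cobar complex,
right-nested. -/
def MC : ℕ → ModuleCat.{u} k
  | 0 => ModuleCat.of k M
  | n + 1 => ModuleCat.of k (MC n ⊗[k] C)

/-- The part of the cobar differential coming from the right coaction on `M`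
and the comultiplications: `m ⊗ c₁ ⊗ ⋯ ⊗ cₙ ↦ ρ_M(m) ⊗ c₁ ⊗ ⋯ ⊗ cₙ
+ ∑ᵢ (−1)ⁱ m ⊗ ⋯ ⊗ Δ(cᵢ) ⊗ ⋯ ⊗ cₙ`. -/
def DcB (Δ : C →ₗ[k] C ⊗[k] C) (ρM : M →ₗ[k] M ⊗[k] C) :
    ∀ n, ↥(MC k C M n) →ₗ[k] ↥(MC k C M (n + 1))
  | 0 => ρM
  | n + 1 =>
      (show ↥(MC k C M (n + 1)) →ₗ[k] ↥(MC k C M (n + 2)) from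
        LinearMap.rTensor C (DcB Δ ρM n)) +
      ((-1 : k) ^ (n + 1)) •
        (show ↥(MC k C M (n + 1)) →ₗ[k] ↥(MC k C M (n + 2)) from
          (TensorProduct.assoc k (↥(MC k C M n)) C C).symm.toLinearMap ∘ₗ
            LinearMap.lTensor (↥(MC k C M n)) Δ)

/-- The cobar differential on `M ⊗ C^{⊗n} ⊗ N`, computing `Cotor_C(M,N)`. -/
def cobarD (Δ : C →ₗ[k] C ⊗[k] C) (ρM : M →ₗ[k] M ⊗[k] C) (ρN : N →ₗ[k] C ⊗[k] N)
    (n : ℕ) : (↥(MC k C M n) ⊗[k] N) →ₗ[k] (↥(MC k C M (n + 1)) ⊗[k] N) :=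
  LinearMap.rTensor N (DcB k C M Δ ρM n) +
  ((-1 : k) ^ (n + 1)) •
    ((show (↥(MC k C M n) ⊗[k] C) ⊗[k] N →ₗ[k] ↥(MC k C M (n + 1)) ⊗[k] N from
        LinearMap.id) ∘ₗ
      (TensorProduct.assoc k (↥(MC k C M n)) C N).symm.toLinearMap ∘ₗ
      LinearMap.lTensor (↥(MC k C M n)) ρN)

/-- `Cotor^n_C(M,N)`, the cohomology of the cobar complex. -/
def cobarH (Δ : C →ₗ[k] C ⊗[k] C) (ρM : M →ₗ[k] M ⊗[k] C) (ρN : N →ₗ[k] C ⊗[k] N) :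
    ℕ → ModuleCat.{u} k
  | 0 => ModuleCat.of k ↥(LinearMap.ker (cobarD k C M N Δ ρM ρN 0))
  | n + 1 =>
      ModuleCat.of k
        (↥(LinearMap.ker (cobarD k C M N Δ ρM ρN (n + 1))) ⧸
          (LinearMap.range (cobarD k C M N Δ ρM ρN n)).comap
            (LinearMap.ker (cobarD k C M N Δ ρM ρN (n + 1))).subtype)

variable (A : Type u) [Ring A] [Algebra k A]
variable (B : Type u) [AddCommGroup B] [Module k B]

/-- The Hochschild `n`-cochains of `A` with coefficients in the bimodule `B`
(`k`-multilinear, in curried form): `HC 0 = B`, `HC (n+1) = A →ₗ HC n`. -/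
def HC : ℕ → ModuleCat.{u} k
  | 0 => ModuleCat.of k B
  | n + 1 => ModuleCat.of k (A →ₗ[k] HC n)

/-- The left action of `A` on cochains through the coefficients. -/
def actLn (lact : A →ₗ[k] B →ₗ[k] B) : ∀ n, A →ₗ[k] (↥(HC k A B n) →ₗ[k] ↥(HC k A B n))
  | 0 => lact
  | n + 1 =>
      show A →ₗ[k] ((A →ₗ[k] ↥(HC k A B n)) →ₗ[k] (A →ₗ[k] ↥(HC k A B n))) from
        (LinearMap.llcomp k A (↥(HC k A B n)) (↥(HC k A B n))).comp (actLn lact n)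

/-- The Hochschild differential
`(δf)(a₁,…,a_{n+1}) = a₁·f(a₂,…) + ∑ᵢ (−1)ⁱ f(…,aᵢa_{i+1},…)
+ (−1)^{n+1} f(a₁,…,aₙ)·a_{n+1}`, written recursively in curried form. -/
def hochD (lact ract : A →ₗ[k] B →ₗ[k] B) : ∀ n, ↥(HC k A B n) →ₗ[k] ↥(HC k A B (n + 1))
  | 0 => (show A →ₗ[k] B →ₗ[k] B from lact - ract).flip
  | n + 1 =>
      (show ↥(HC k A B (n + 1)) →ₗ[k] ↥(HC k A B (n + 2)) from
        ((LinearMap.llcomp k A (↥(HC k A B n)) (↥(HC k A B n))).comp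
          (actLn k A B lact n)).flip)
      - (show ↥(HC k A B (n + 1)) →ₗ[k] ↥(HC k A B (n + 2)) from
          (LinearMap.llcomp k A A (↥(HC k A B n))).compl₂ (LinearMap.mul k A))
      - (show ↥(HC k A B (n + 1)) →ₗ[k] ↥(HC k A B (n + 2)) from
          LinearMap.llcomp k A (↥(HC k A B n)) (↥(HC k A B (n + 1)))
            (hochD lact ract n))
      + (show ↥(HC k A B (n + 1)) →ₗ[k] ↥(HC k A B (n + 2)) from
          LinearMap.llcomp k A (↥(HC k A B n)) (↥(HC k A B (n + 1)))
            (actLn k A B lact n).flip)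

/-- `HH^n(A,B)`, the cohomology of the Hochschild cochain complex. -/
def hochH (lact ract : A →ₗ[k] B →ₗ[k] B) : ℕ → ModuleCat.{u} k
  | 0 => ModuleCat.of k ↥(LinearMap.ker (hochD k A B lact ract 0))
  | n + 1 =>
      ModuleCat.of k
        (↥(LinearMap.ker (hochD k A B lact ract (n + 1))) ⧸
          (LinearMap.range (hochD k A B lact ract n)).comap
            (LinearMap.ker (hochD k A B lact ract (n + 1))).subtype)

/-- Evaluation of a linear functional at `a ∈ A`. -/
def evalAt (a : A) : Module.Dual k A →ₗ[k] k := LinearMap.id.flip a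

section Contraction

variable {k A} {V : Type*} [AddCommGroup V] [Module k V] {W : Type*} [AddCommGroup W] [Module k W]

/-- The contraction `V ⊗ A* → V`, `v ⊗ c ↦ c(a) v`. Composed with a right coaction of `A*` on `V`
it is the action of `a` on `V`. -/
def evalRightAt (a : A) : V ⊗[k] Module.Dual k A →ₗ[k] V :=
  (TensorProduct.rid k V).toLinearMap ∘ₗ LinearMap.lTensor V (evalAt k A a)

/-- The contraction `A* ⊗ V → V`, `c ⊗ v ↦ c(a) v`. Composed with a left coaction of `A*` on `V`
it is the action of `a` on `V`. -/
def evalLeftAt (a : A) : Module.Dual k A ⊗[k] V →ₗ[k] V :=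
  (TensorProduct.lid k V).toLinearMap ∘ₗ LinearMap.rTensor V (evalAt k A a)

@[simp]
lemma evalRightAt_tmul (a : A) (v : V) (c : Module.Dual k A) :
    evalRightAt a (v ⊗ₜ[k] c) = c a • v := rfl

@[simp]
lemma evalLeftAt_tmul (a : A) (c : Module.Dual k A) (v : V) :
    evalLeftAt a (c ⊗ₜ[k] v) = c a • v := rfl

lemma evalRightAt_rTensor (a : A) (f : V →ₗ[k] W) (t : V ⊗[k] Module.Dual k A) :
    evalRightAt a (f.rTensor (Module.Dual k A) t) = f (evalRightAt a t) := by
  have h : evalRightAt a ∘ₗ f.rTensor (Module.Dual k A) = f ∘ₗ evalRightAt a :=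
    TensorProduct.ext' fun v c => by simp
  exact LinearMap.congr_fun h t

lemma rTensor_evalRightAt (a : A) :
    LinearMap.rTensor W (evalRightAt (V := V) a) =
      LinearMap.lTensor V (evalLeftAt a) ∘ₗ
        (TensorProduct.assoc k V (Module.Dual k A) W).toLinearMap :=
  TensorProduct.ext_threefold fun v c w => by simp [TensorProduct.smul_tmul]

lemma evalRightAt_evalRightAt_assoc_symm (a b : A) (v : V)
    (y : Module.Dual k A ⊗[k] Module.Dual k A) :
    evalRightAt a (evalRightAt b ((TensorProduct.assoc k V _ _).symm (v ⊗ₜ[k] y))) =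
      TensorProduct.dualDistrib k A A y (a ⊗ₜ[k] b) • v := by
  induction y using TensorProduct.induction_on with
  | zero => simp
  | add x y hx hy =>
    simp only [TensorProduct.tmul_add, map_add, hx, hy, LinearMap.add_apply, add_smul]
  | tmul c d => simp [smul_smul, mul_comm]

/-- `Δ` is the comultiplication of `A*` dual to the multiplication of `A`. -/
def IsDualComul (Δ : Module.Dual k A →ₗ[k] Module.Dual k A ⊗[k] Module.Dual k A) : Prop :=
  ∀ (f : Module.Dual k A) (a b : A),
    TensorProduct.dualDistrib k A A (Δ f) (a ⊗ₜ[k] b) = f (a * b)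

lemma evalRightAt_evalRightAt_comul
    {Δ : Module.Dual k A →ₗ[k] Module.Dual k A ⊗[k] Module.Dual k A} (hΔ : IsDualComul Δ)
    (a b : A) (t : V ⊗[k] Module.Dual k A) :
    evalRightAt a (evalRightAt b ((TensorProduct.assoc k V _ _).symm (Δ.lTensor V t))) =
      evalRightAt (a * b) t := by
  induction t using TensorProduct.induction_on with
  | zero => simp
  | add s t hs ht => simp only [map_add, hs, ht]
  | tmul v c =>
    rw [LinearMap.lTensor_tmul, evalRightAt_evalRightAt_assoc_symm, hΔ, evalRightAt_tmul]

variable (k A V W) in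
/-- The isomorphism `V ⊗ (A* ⊗ W) ≃ Hom_k(A, V ⊗ W)`, `v ⊗ (c ⊗ w) ↦ (a ↦ c(a) v ⊗ w)`. -/
def tensorDualTensorEquivHom [Module.Finite k A] :
    V ⊗[k] (Module.Dual k A ⊗[k] W) ≃ₗ[k] (A →ₗ[k] V ⊗[k] W) :=
  (TensorProduct.leftComm k V (Module.Dual k A) W).trans (dualTensorHomEquiv k A (V ⊗[k] W))

lemma tensorDualTensorEquivHom_apply [Module.Finite k A]
    (y : V ⊗[k] (Module.Dual k A ⊗[k] W)) (a : A) :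
    tensorDualTensorEquivHom k A V W y a = LinearMap.lTensor V (evalLeftAt a) y := by
  have h : LinearMap.applyₗ a ∘ₗ (tensorDualTensorEquivHom k A V W).toLinearMap =
      LinearMap.lTensor V (evalLeftAt a) :=
    TensorProduct.ext_threefold' fun v c w => by
      simp [tensorDualTensorEquivHom, dualTensorHomEquiv]
  exact LinearMap.congr_fun h y

end Contraction

section ContractNth

variable {α : Type*} {n : ℕ}

lemma tail_contractNth_zero (op : α → α → α) (a : Fin (n + 2) → α) :
    Fin.tail (Fin.contractNth 0 op a) = Fin.tail (Fin.tail a) := by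
  ext j
  simp [Fin.tail, Fin.contractNth]

lemma contractNth_succ_zero (op : α → α → α) (i : Fin (n + 1)) (a : Fin (n + 2) → α) :
    Fin.contractNth i.succ op a 0 = a 0 := by
  simp [Fin.contractNth]

lemma tail_contractNth_succ (op : α → α → α) (i : Fin (n + 1)) (a : Fin (n + 2) → α) :
    Fin.tail (Fin.contractNth i.succ op a) = Fin.contractNth i op (Fin.tail a) := by
  ext j
  simp [Fin.tail, Fin.contractNth]

lemma init_contractNth_castSucc (op : α → α → α) (i : Fin (n + 1)) (a : Fin (n + 2) → α) :
    Fin.init (Fin.contractNth i.castSucc op a) = Fin.contractNth i op (Fin.init a) := by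
  ext j
  simp [Fin.init, Fin.contractNth]

lemma contractNth_last (op : α → α → α) (a : Fin (n + 1) → α) :
    Fin.contractNth (Fin.last n) op a = Fin.init a := by
  ext j
  exact Fin.contractNth_apply_of_lt _ _ _ _ j.is_lt

lemma contractNth_castSucc_castSucc_last (op : α → α → α) (i : Fin n) (a : Fin (n + 2) → α) :
    Fin.contractNth i.castSucc.castSucc op a (Fin.last n) = a (Fin.last (n + 1)) :=
  Fin.contractNth_apply_of_gt _ _ _ _ i.is_lt

lemma contractNth_castSucc_last_last (op : α → α → α) (a : Fin (n + 2) → α) :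
    Fin.contractNth (Fin.last n).castSucc op a (Fin.last n) =
      op (a (Fin.last n).castSucc) (a (Fin.last (n + 1))) :=
  Fin.contractNth_apply_of_eq _ _ _ _ rfl

end ContractNth

section HochschildCochains

variable {k A B} {B' : Type u} [AddCommGroup B'] [Module k B'] {n : ℕ}

/-- The `n`-cochain `f(x, -, …, -)` obtained from an `(n+1)`-cochain `f` by fixing its first
argument. -/
def HC.evalHead (x : A) : HC k A B (n + 1) →ₗ[k] HC k A B n :=
  show (A →ₗ[k] HC k A B n) →ₗ[k] HC k A B n from LinearMap.applyₗ x

/-- The value `f(a₁, …, aₙ)` of an `n`-cochain `f`. -/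
def HC.eval : ∀ {n : ℕ}, (Fin n → A) → (HC k A B n →ₗ[k] B)
  | 0, _ => LinearMap.id
  | _ + 1, a => HC.eval (Fin.tail a) ∘ₗ HC.evalHead (a 0)

lemma HC.eval_succ (a : Fin (n + 1) → A) (f : HC k A B (n + 1)) :
    HC.eval a f = HC.eval (Fin.tail a) (HC.evalHead (a 0) f) := rfl

lemma HC.ext_eval {f g : HC k A B n} (h : ∀ a, HC.eval a f = HC.eval a g) : f = g := by
  induction n with
  | zero => exact h Fin.elim0
  | succ n ih => exact LinearMap.ext fun x => ih fun a => h (Fin.cons x a)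

lemma HC.eval_actLn (lact : A →ₗ[k] B →ₗ[k] B) (a : Fin n → A) (x : A) (f : HC k A B n) :
    HC.eval a (actLn k A B lact n x f) = lact x (HC.eval a f) := by
  induction n with
  | zero => rfl
  | succ n ih => exact ih (Fin.tail a) (HC.evalHead (a 0) f)

lemma evalHead_evalHead_hochD_succ (lact ract : A →ₗ[k] B →ₗ[k] B) (x y : A)
    (f : HC k A B (n + 1)) :
    HC.evalHead y (HC.evalHead x (hochD k A B lact ract (n + 1) f)) =
      actLn k A B lact n x (HC.evalHead y f) - HC.evalHead (x * y) f
        - HC.evalHead y (hochD k A B lact ract n (HC.evalHead x f))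
        + actLn k A B lact n y (HC.evalHead x f) := rfl

lemma eval_hochD (lact ract : A →ₗ[k] B →ₗ[k] B) (a : Fin (n + 1) → A) (f : HC k A B n) :
    HC.eval a (hochD k A B lact ract n f) =
      lact (a 0) (HC.eval (Fin.tail a) f)
        + ∑ i : Fin n, (-1 : k) ^ (i + 1 : ℕ) •
            HC.eval (Fin.contractNth i.castSucc (· * ·) a) f
        + (-1 : k) ^ (n + 1) • ract (a (Fin.last n)) (HC.eval (Fin.init a) f) := by
  induction n with
  | zero =>
    have h : HC.eval a (hochD k A B lact ract 0 f) =
        lact (a 0) (HC.eval (Fin.tail a) f) - ract (a (Fin.last 0)) (HC.eval (Fin.init a) f) := rfl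
    simp [h, sub_eq_add_neg]
  | succ n ih =>
    have ih' := ih (Fin.tail a) (HC.evalHead (a 0) f)
    rw [HC.eval_succ] at ih'
    rw [HC.eval_succ, HC.eval_succ, evalHead_evalHead_hochD_succ, map_add, map_sub, map_sub, ih',
      HC.eval_actLn, HC.eval_actLn, Fin.sum_univ_succ]
    have merge_head : HC.eval (Fin.contractNth (Fin.castSucc 0) (· * ·) a) f =
        HC.eval (Fin.tail (Fin.tail a)) (HC.evalHead (a 0 * Fin.tail a 0) f) := by
      rw [HC.eval_succ, Fin.castSucc_zero, tail_contractNth_zero]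
      rfl
    have merge_tail (i : Fin n) : HC.eval (Fin.contractNth i.succ.castSucc (· * ·) a) f =
        HC.eval (Fin.contractNth i.castSucc (· * ·) (Fin.tail a)) (HC.evalHead (a 0) f) := by
      rw [HC.eval_succ, Fin.castSucc_succ, tail_contractNth_succ, contractNth_succ_zero]
    rw [merge_head]
    simp only [merge_tail, Fin.val_succ, Fin.val_zero, pow_succ, mul_neg_one, neg_smul,
      Finset.sum_neg_distrib, zero_add, pow_zero, one_smul]
    have tail_last : Fin.tail a (Fin.last n) = a (Fin.last (n + 1)) := rfl
    have init_zero : Fin.init a 0 = a 0 := rfl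
    rw [HC.eval_succ (Fin.tail a), HC.eval_succ (Fin.init a), ← Fin.tail_init_eq_init_tail,
      tail_last, init_zero]
    abel

/-- Cochains with coefficients in isomorphic modules are isomorphic. -/
def HC.congrRight (e : B ≃ₗ[k] B') : ∀ n, HC k A B n ≃ₗ[k] HC k A B' n
  | 0 => e
  | n + 1 => show (A →ₗ[k] HC k A B n) ≃ₗ[k] (A →ₗ[k] HC k A B' n) from
      (HC.congrRight e n).congrRight

lemma HC.eval_congrRight (e : B ≃ₗ[k] B') (a : Fin n → A) (f : HC k A B n) :
    HC.eval a (HC.congrRight e n f) = e (HC.eval a f) := by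
  induction n with
  | zero => rfl
  | succ n ih => exact ih (Fin.tail a) (HC.evalHead (a 0) f)

variable (k A B) in
/-- An `n`-cochain with values in `Hom_k(A, B)` is an `(n+1)`-cochain with values in `B`, the
additional argument being the last one. -/
def HC.uncurryLast : ∀ n, HC k A (A →ₗ[k] B) n ≃ₗ[k] HC k A B (n + 1)
  | 0 => LinearEquiv.refl k _
  | n + 1 => show (A →ₗ[k] HC k A (A →ₗ[k] B) n) ≃ₗ[k] (A →ₗ[k] HC k A B (n + 1)) from
      (HC.uncurryLast n).congrRight

lemma HC.eval_uncurryLast (a : Fin (n + 1) → A) (f : HC k A (A →ₗ[k] B) n) :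
    HC.eval a (HC.uncurryLast k A B n f) = HC.eval (Fin.init a) f (a (Fin.last n)) := by
  induction n with
  | zero => rfl
  | succ n ih => exact ih (Fin.tail a) (HC.evalHead (a 0) f)

end HochschildCochains

section CobarCochains

variable {k M N A} {n : ℕ}

/-- The contraction `m ⊗ c₁ ⊗ ⋯ ⊗ cₙ₊₁ ↦ cₙ₊₁(x) m ⊗ c₁ ⊗ ⋯ ⊗ cₙ` of the last factor. -/
def MC.evalLast (x : A) :
    MC k (Module.Dual k A) M (n + 1) →ₗ[k] MC k (Module.Dual k A) M n :=
  show MC k (Module.Dual k A) M n ⊗[k] Module.Dual k A →ₗ[k] MC k (Module.Dual k A) M n from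
    evalRightAt x

/-- The full contraction `m ⊗ c₁ ⊗ ⋯ ⊗ cₙ ↦ c₁(a₁) ⋯ cₙ(aₙ) m`. -/
def MC.eval : ∀ {n : ℕ}, (Fin n → A) → (MC k (Module.Dual k A) M n →ₗ[k] M)
  | 0, _ => LinearMap.id
  | n + 1, a => MC.eval (Fin.init a) ∘ₗ MC.evalLast (a (Fin.last n))

lemma MC.eval_succ (a : Fin (n + 1) → A) (t : MC k (Module.Dual k A) M (n + 1)) :
    MC.eval a t = MC.eval (Fin.init a) (MC.evalLast (a (Fin.last n)) t) := rfl

variable {Δ : Module.Dual k A →ₗ[k] Module.Dual k A ⊗[k] Module.Dual k A}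

lemma evalLast_evalLast_DcB_succ (hΔ : IsDualComul Δ) (ρM : M →ₗ[k] M ⊗[k] Module.Dual k A)
    (x y : A) (t : MC k (Module.Dual k A) M (n + 1)) :
    MC.evalLast x (MC.evalLast y (DcB k (Module.Dual k A) M Δ ρM (n + 1) t)) =
      MC.evalLast x (DcB k (Module.Dual k A) M Δ ρM n (MC.evalLast y t))
        + (-1 : k) ^ (n + 1) • MC.evalLast (x * y) t := by
  have rTensor_part := evalRightAt_rTensor y (DcB k (Module.Dual k A) M Δ ρM n) t
  have comul_part := evalRightAt_evalRightAt_comul hΔ x y t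
  let evalLastTwo := MC.evalLast (k := k) (M := M) (n := n) x ∘ₗ MC.evalLast y
  exact (map_add evalLastTwo _ _).trans <| congrArg₂ (· + ·)
    (congrArg (MC.evalLast x) rTensor_part)
    ((map_smul evalLastTwo _ _).trans (congrArg ((-1 : k) ^ (n + 1) • ·) comul_part))

lemma eval_DcB (hΔ : IsDualComul Δ) (ρM : M →ₗ[k] M ⊗[k] Module.Dual k A) (a : Fin (n + 1) → A)
    (t : MC k (Module.Dual k A) M n) :
    MC.eval a (DcB k (Module.Dual k A) M Δ ρM n t) =
      evalRightAt (a 0) (ρM (MC.eval (Fin.tail a) t))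
        + ∑ i : Fin n, (-1 : k) ^ (i + 1 : ℕ) •
            MC.eval (Fin.contractNth i.castSucc (· * ·) a) t := by
  induction n with
  | zero =>
    rw [Fin.sum_univ_zero, add_zero]
    rfl
  | succ n ih =>
    have ih' := ih (Fin.init a) (MC.evalLast (a (Fin.last (n + 1))) t)
    rw [MC.eval_succ] at ih'
    rw [MC.eval_succ, MC.eval_succ, evalLast_evalLast_DcB_succ hΔ, map_add, map_smul, ih',
      Fin.sum_univ_castSucc, add_assoc]
    have merge_init (i : Fin n) :
        MC.eval (Fin.contractNth i.castSucc.castSucc (· * ·) a) t =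
          MC.eval (Fin.contractNth i.castSucc (· * ·) (Fin.init a))
            (MC.evalLast (a (Fin.last (n + 1))) t) := by
      rw [MC.eval_succ, init_contractNth_castSucc, contractNth_castSucc_castSucc_last]
    have merge_last : MC.eval (Fin.contractNth (Fin.last n).castSucc (· * ·) a) t =
        MC.eval (Fin.init (Fin.init a))
          (MC.evalLast (a (Fin.last n).castSucc * a (Fin.last (n + 1))) t) := by
      rw [MC.eval_succ, init_contractNth_castSucc, contractNth_last,
        contractNth_castSucc_last_last]
    simp only [merge_init, merge_last]
    rfl

variable (k M N A n) in
/-- The associator `(M ⊗ C^{⊗(n+1)}) ⊗ N ≃ (M ⊗ C^{⊗n}) ⊗ (C ⊗ N)` for `C = A*`. -/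
def MC.assocLast : MC k (Module.Dual k A) M (n + 1) ⊗[k] N ≃ₗ[k]
    MC k (Module.Dual k A) M n ⊗[k] (Module.Dual k A ⊗[k] N) :=
  TensorProduct.assoc k (MC k (Module.Dual k A) M n) (Module.Dual k A) N

lemma rTensor_eval_succ (a : Fin (n + 1) → A) (t : MC k (Module.Dual k A) M (n + 1) ⊗[k] N) :
    LinearMap.rTensor N (MC.eval a) t =
      LinearMap.lTensor M (evalLeftAt (a (Fin.last n)))
        (LinearMap.rTensor (Module.Dual k A ⊗[k] N) (MC.eval (Fin.init a))
          (MC.assocLast k M N A n t)) := by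
  calc
    _ = LinearMap.rTensor N (MC.eval (Fin.init a))
          (LinearMap.rTensor N (MC.evalLast (a (Fin.last n))) t) :=
      LinearMap.rTensor_comp_apply N _ _ t
    _ = LinearMap.rTensor N (MC.eval (Fin.init a))
          (LinearMap.lTensor (MC k (Module.Dual k A) M n) (evalLeftAt (a (Fin.last n)))
            (MC.assocLast k M N A n t)) :=
      congrArg _ (LinearMap.congr_fun (rTensor_evalRightAt (a (Fin.last n))) t)
    _ = _ := LinearMap.congr_fun ((LinearMap.rTensor_comp_lTensor ..).trans
      (LinearMap.lTensor_comp_rTensor ..).symm) _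

lemma rTensor_eval_cobarD_tmul (hΔ : IsDualComul Δ) (ρM : M →ₗ[k] M ⊗[k] Module.Dual k A)
    (ρN : N →ₗ[k] Module.Dual k A ⊗[k] N) (a : Fin (n + 1) → A)
    (t : MC k (Module.Dual k A) M n) (x : N) :
    LinearMap.rTensor N (MC.eval a) (cobarD k (Module.Dual k A) M N Δ ρM ρN n (t ⊗ₜ[k] x)) =
      evalRightAt (a 0) (ρM (MC.eval (Fin.tail a) t)) ⊗ₜ[k] x
        + ∑ i : Fin n, (-1 : k) ^ (i + 1 : ℕ) •
            (MC.eval (Fin.contractNth i.castSucc (· * ·) a) t ⊗ₜ[k] x)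
        + (-1 : k) ^ (n + 1) •
            (MC.eval (Fin.init a) t ⊗ₜ[k] evalLeftAt (a (Fin.last n)) (ρN x)) := by
  have coactionN_part :
      LinearMap.rTensor N (MC.eval a) ((MC.assocLast k M N A n).symm (t ⊗ₜ[k] ρN x)) =
        MC.eval (Fin.init a) t ⊗ₜ[k] evalLeftAt (a (Fin.last n)) (ρN x) := by
    rw [rTensor_eval_succ, LinearEquiv.apply_symm_apply, LinearMap.rTensor_tmul,
      LinearMap.lTensor_tmul]
  have DcB_part : LinearMap.rTensor N (MC.eval a)
      (DcB k (Module.Dual k A) M Δ ρM n t ⊗ₜ[k] x) =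
        evalRightAt (a 0) (ρM (MC.eval (Fin.tail a) t)) ⊗ₜ[k] x
          + ∑ i : Fin n, (-1 : k) ^ (i + 1 : ℕ) •
              (MC.eval (Fin.contractNth i.castSucc (· * ·) a) t ⊗ₜ[k] x) := by
    simp only [LinearMap.rTensor_tmul, eval_DcB hΔ, TensorProduct.add_tmul,
      TensorProduct.sum_tmul, TensorProduct.smul_tmul']
  exact (map_add (LinearMap.rTensor N (MC.eval a)) _ _).trans <| congrArg₂ (· + ·) DcB_part <|
    (map_smul (LinearMap.rTensor N (MC.eval a)) _ _).trans <|
      congrArg ((-1 : k) ^ (n + 1) • ·) coactionN_part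

variable (k M A) in
/-- The isomorphism from cobar `n`-cochains to Hochschild `n`-cochains; the cochain attached to `t`
takes the value `MC.eval a t` (tensored with `N`) at `a`. -/
def cobarHochEquiv [Module.Finite k A] : ∀ (n : ℕ) (N : Type u) [AddCommGroup N] [Module k N],
    MC k (Module.Dual k A) M n ⊗[k] N ≃ₗ[k] HC k A (M ⊗[k] N) n
  | 0, N, _, _ => LinearEquiv.refl k (M ⊗[k] N)
  | n + 1, N, _, _ =>
      MC.assocLast k M N A n ≪≫ₗ cobarHochEquiv n (Module.Dual k A ⊗[k] N) ≪≫ₗ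
        HC.congrRight (tensorDualTensorEquivHom k A M N) n ≪≫ₗ HC.uncurryLast k A (M ⊗[k] N) n

lemma eval_cobarHochEquiv [Module.Finite k A] (a : Fin n → A)
    (t : MC k (Module.Dual k A) M n ⊗[k] N) :
    HC.eval a (cobarHochEquiv k M A n N t) = LinearMap.rTensor N (MC.eval a) t := by
  induction n generalizing N with
  | zero =>
    change M ⊗[k] N at t
    exact (LinearMap.congr_fun (LinearMap.rTensor_id N M) t).symm
  | succ n ih =>
    have ih' := ih (N := Module.Dual k A ⊗[k] N) (Fin.init a) (MC.assocLast k M N A n t)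
    rw [cobarHochEquiv, LinearEquiv.trans_apply, LinearEquiv.trans_apply, LinearEquiv.trans_apply,
      HC.eval_uncurryLast, HC.eval_congrRight, tensorDualTensorEquivHom_apply, rTensor_eval_succ]
    exact congrArg (LinearMap.lTensor M (evalLeftAt (a (Fin.last n)))) ih'

lemma cobarHochEquiv_comp_cobarD [Module.Finite k A] (hΔ : IsDualComul Δ)
    {ρM : M →ₗ[k] M ⊗[k] Module.Dual k A} {ρN : N →ₗ[k] Module.Dual k A ⊗[k] N}
    {lact ract : A →ₗ[k] (M ⊗[k] N) →ₗ[k] (M ⊗[k] N)}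
    (hlact : ∀ a m x, lact a (m ⊗ₜ[k] x) = evalRightAt a (ρM m) ⊗ₜ[k] x)
    (hract : ∀ a m x, ract a (m ⊗ₜ[k] x) = m ⊗ₜ[k] evalLeftAt a (ρN x)) (n : ℕ) :
    (cobarHochEquiv k M A (n + 1) N).toLinearMap ∘ₗ cobarD k (Module.Dual k A) M N Δ ρM ρN n =
      hochD k A (M ⊗[k] N) lact ract n ∘ₗ (cobarHochEquiv k M A n N).toLinearMap := by
  refine TensorProduct.ext' fun t x => HC.ext_eval fun a => ?_
  simp only [LinearMap.comp_apply, LinearEquiv.coe_coe, eval_cobarHochEquiv,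
    rTensor_eval_cobarD_tmul hΔ, eval_hochD, LinearMap.rTensor_tmul, hlact, hract]

end CobarCochains

section Cohomology

variable {R U V W U' V' W' : Type*} [Ring R] [AddCommGroup U] [Module R U] [AddCommGroup V]
  [Module R V] [AddCommGroup W] [Module R W] [AddCommGroup U'] [Module R U'] [AddCommGroup V']
  [Module R V'] [AddCommGroup W'] [Module R W']

lemma map_ker_eq_ker_of_comm {d : V →ₗ[R] W} {d' : V' →ₗ[R] W'} {e : V ≃ₗ[R] V'}
    {f : W ≃ₗ[R] W'} (h : f.toLinearMap ∘ₗ d = d' ∘ₗ e.toLinearMap) :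
    (LinearMap.ker d).map e.toLinearMap = LinearMap.ker d' := by
  rw [← LinearEquiv.ker_comp f d, h, LinearMap.ker_comp,
    Submodule.map_comap_eq_of_surjective e.surjective]

lemma map_range_eq_range_of_comm {c : U →ₗ[R] V} {c' : U' →ₗ[R] V'} {b : U ≃ₗ[R] U'}
    {e : V ≃ₗ[R] V'} (h : e.toLinearMap ∘ₗ c = c' ∘ₗ b.toLinearMap) :
    (LinearMap.range c).map e.toLinearMap = LinearMap.range c' := by
  rw [← LinearMap.range_comp, h, LinearMap.range_comp_of_range_eq_top _ b.range]

/-- The isomorphism `ker d ≃ ker d'` induced by an isomorphism of maps `d ≃ d'`; it is the map on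
cohomology in degree `0`. -/
def kerEquivOfComm {d : V →ₗ[R] W} {d' : V' →ₗ[R] W'} (e : V ≃ₗ[R] V') (f : W ≃ₗ[R] W')
    (h : f.toLinearMap ∘ₗ d = d' ∘ₗ e.toLinearMap) : LinearMap.ker d ≃ₗ[R] LinearMap.ker d' :=
  e.ofSubmodules _ _ (map_ker_eq_ker_of_comm h)

/-- The isomorphism on cohomology at the middle term induced by an isomorphism from `U → V → W` to
`U' → V' → W'`. -/
def cohomologyEquivOfComm {c : U →ₗ[R] V} {c' : U' →ₗ[R] V'} {d : V →ₗ[R] W} {d' : V' →ₗ[R] W'}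
    (b : U ≃ₗ[R] U') (e : V ≃ₗ[R] V') (f : W ≃ₗ[R] W')
    (hc : e.toLinearMap ∘ₗ c = c' ∘ₗ b.toLinearMap)
    (hd : f.toLinearMap ∘ₗ d = d' ∘ₗ e.toLinearMap) :
    (LinearMap.ker d ⧸ (LinearMap.range c).comap (LinearMap.ker d).subtype) ≃ₗ[R]
      (LinearMap.ker d' ⧸ (LinearMap.range c').comap (LinearMap.ker d').subtype) :=
  Submodule.Quotient.equiv _ _ (kerEquivOfComm e f hd) <| by
    rw [← map_range_eq_range_of_comm hc]
    ext y
    rw [Submodule.mem_map_equiv, Submodule.mem_comap, Submodule.mem_comap, Submodule.mem_map_equiv]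
    rfl

end Cohomology

/-- Let `A` be a finite-dimensional `k`-algebra and `C = A*` its dual coalgebra
(`Δ` dual to the multiplication, `ε = ev₁`).  Let `M` be a left `A`-module and
`N` a right `A`-module, i.e. a right `C`-comodule and a left `C`-comodule with
coactions `ρ_M`, `ρ_N` dual to the actions.  Then
`Cotor^n_C(M,N) ≅ HH^n(A, M ⊗ N)` for all `n ≥ 0`, where `M ⊗ N` carries the
`A`-bimodule structure `a·(m⊗x) = am ⊗ x`, `(m⊗x)·a = m ⊗ xa`. -/
theorem cotor_dual_coalgebra_iso_hochschild
    (A : Type u) [Ring A] [Algebra k A] [FiniteDimensional k A]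
    [Module A M] [IsScalarTower k A M]
    [Module Aᵐᵒᵖ N] [IsScalarTower k Aᵐᵒᵖ N]
    -- the dual coalgebra structure on C = A*
    (comul : Module.Dual k A →ₗ[k] Module.Dual k A ⊗[k] Module.Dual k A)
    (hcomul : ∀ (f : Module.Dual k A) (a b : A),
      TensorProduct.dualDistrib k A A (comul f) (a ⊗ₜ[k] b) = f (a * b))
    (counit : Module.Dual k A →ₗ[k] k)
    (hcounit : ∀ f : Module.Dual k A, counit f = f 1)
    -- the right C-comodule structure on M dual to the left A-action
    (ρM : M →ₗ[k] M ⊗[k] Module.Dual k A)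
    (hρM : ∀ (m : M) (a : A),
      TensorProduct.rid k M (LinearMap.lTensor M (evalAt k A a) (ρM m)) = a • m)
    -- the left C-comodule structure on N dual to the right A-action
    (ρN : N →ₗ[k] Module.Dual k A ⊗[k] N)
    (hρN : ∀ (x : N) (a : A),
      TensorProduct.lid k N (LinearMap.rTensor N (evalAt k A a) (ρN x)) =
        MulOpposite.op a • x)
    -- the A-bimodule structure on B = M ⊗ N
    (lact ract : A →ₗ[k] (M ⊗[k] N) →ₗ[k] (M ⊗[k] N))
    (hlact : ∀ (a : A) (m : M) (x : N), lact a (m ⊗ₜ[k] x) = (a • m) ⊗ₜ[k] x)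
    (hract : ∀ (a : A) (m : M) (x : N),
      ract a (m ⊗ₜ[k] x) = m ⊗ₜ[k] (MulOpposite.op a • x)) :
    ∀ n : ℕ,
      Nonempty
        (↥(cobarH k (Module.Dual k A) M N comul ρM ρN n) ≃ₗ[k]
          ↥(hochH k A (M ⊗[k] N) lact ract n)) := by
  have hl (a : A) (m : M) (x : N) : lact a (m ⊗ₜ[k] x) = evalRightAt a (ρM m) ⊗ₜ[k] x := by
    rw [hlact, ← hρM]
    rfl
  have hr (a : A) (m : M) (x : N) : ract a (m ⊗ₜ[k] x) = m ⊗ₜ[k] evalLeftAt a (ρN x) := by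
    rw [hract, ← hρN]
    rfl
  have comm := cobarHochEquiv_comp_cobarD hcomul hl hr
  rintro (_ | n)
  · exact ⟨kerEquivOfComm _ _ (comm 0)⟩
  · exact ⟨cohomologyEquivOfComm _ _ _ (comm n) (comm (n + 1))⟩

end
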